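/- arXiv:2601.19848 — 2 statements merged into one kernel-verified Lean document; each statement's English description precedes it below -/
import Mathlib

section
/- For every k ≥ 1: (a) W_opt(n, k, 2) ≥ 3 for all n, and (b) there exists n (in fact n = 4k works) with W_opt(n, k, 2) = 3. Hence the minimum over all blocklengths n of W_opt(n, k, 2) equals 3. -/
open scoped Classical

noncomputable section

/-- Pauli strings modulo phase, indexed by a finite type. -/
abbrev PauliT (ι : Type) : Type := ι → ZMod 2 × ZMod 2

abbrev Pauli (n : ℕ) : Type := PauliT (Fin n)

variable {ι : Type} [Fintype ι]

/-- Weight of a Pauli string. -/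
def wt (v : PauliT ι) : ℕ := (Finset.univ.filter fun i => v i ≠ 0).card

/-- Support of a Pauli string. -/
def suppF (v : PauliT ι) : Finset ι := Finset.univ.filter fun i => v i ≠ 0

/-- Symplectic form encoding commutation. -/
def sympl (u v : PauliT ι) : ZMod 2 :=
  ∑ i, ((u i).1 * (v i).2 + (u i).2 * (v i).1)

/-- `G` is a stabilizer group (isotropic subspace). -/
def IsStabilizer (G : Submodule (ZMod 2) (PauliT ι)) : Prop :=
  ∀ u ∈ G, ∀ v ∈ G, sympl u v = 0

/-- Membership in the symplectic dual `G^⊥`. -/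
def inDual (G : Submodule (ZMod 2) (PauliT ι)) (v : PauliT ι) : Prop :=
  ∀ g ∈ G, sympl v g = 0

/-- Distance: minimum weight of an element of `G^⊥ \ G`, `⊤` if none exists. -/
def distG (G : Submodule (ZMod 2) (PauliT ι)) : ℕ∞ :=
  sInf ((fun v => (wt v : ℕ∞)) '' {v | inDual G v ∧ v ∉ G})

/-- `g` is an `𝔽₂`-basis (indexed family) of `G`. -/
def IsBasisFam {r : ℕ} (G : Submodule (ZMod 2) (PauliT ι)) (g : Fin r → PauliT ι) : Prop :=
  LinearIndependent (ZMod 2) g ∧ Submodule.span (ZMod 2) (Set.range g) = G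

/-- The weight of a stabilizer group: optimal maximum generator weight over bases. -/
def Wgt (G : Submodule (ZMod 2) (PauliT ι)) : ℕ∞ :=
  ⨅ (r : ℕ) (g : Fin r → PauliT ι) (_ : IsBasisFam G g),
    Finset.univ.sup fun i => (wt (g i) : ℕ∞)

/-- Optimal weight over all `[[n,k,d]]` stabilizer codes. -/
def Wopt (n k : ℕ) (d : ℕ∞) : ℕ∞ :=
  ⨅ (G : Submodule (ZMod 2) (Pauli n))
    (_ : IsStabilizer G ∧ Module.finrank (ZMod 2) ↥G = n - k ∧ distG G = d),
    Wgt G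

/-- Weight enumerator: number of elements of `G` of weight `j`. -/
def Aj (G : Submodule (ZMod 2) (PauliT ι)) (j : ℕ) : ℕ :=
  Nat.card {g : PauliT ι // g ∈ G ∧ wt g = j}

/-- A weight-optimal generating set. -/
def IsWeightOptimalBasis {r : ℕ} (G : Submodule (ZMod 2) (PauliT ι))
    (g : Fin r → PauliT ι) : Prop :=
  IsBasisFam G g ∧ Monotone (fun i => wt (g i)) ∧
    ∀ h : Fin r → PauliT ι, IsBasisFam G h → Monotone (fun i => wt (h i)) →
      ∀ i, wt (g i) ≤ wt (h i)

/-- Set of average generator weights over all bases of `G`. -/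
def WavgSet (G : Submodule (ZMod 2) (PauliT ι)) : Set ℚ :=
  {x | ∃ (r : ℕ) (g : Fin r → PauliT ι), IsBasisFam G g ∧
        x = (∑ i, (wt (g i) : ℚ)) / (r : ℚ)}

/-- Splitting of Pauli strings along a bipartition given by a predicate. -/
def splitEquiv (p : ι → Prop) :
    PauliT ι ≃ₗ[ZMod 2] PauliT {x // p x} × PauliT {x // ¬ p x} :=
  (LinearEquiv.funCongrLeft (ZMod 2) (ZMod 2 × ZMod 2) (Equiv.sumCompl p)).trans
    (LinearEquiv.sumArrowLequivProdArrow _ _ _ _)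

/-- Tensor product of subspaces along a bipartition. -/
def tensorAlong (p : ι → Prop)
    (GA : Submodule (ZMod 2) (PauliT {x // p x}))
    (GB : Submodule (ZMod 2) (PauliT {x // ¬ p x})) :
    Submodule (ZMod 2) (PauliT ι) :=
  (GA.prod GB).comap (splitEquiv p).toLinearMap

/-- Decomposability as a tensor product over a nontrivial bipartition. -/
def Decomposable (G : Submodule (ZMod 2) (PauliT ι)) : Prop :=
  ∃ p : ι → Prop, (∃ x, p x) ∧ (∃ x, ¬ p x) ∧
    ∃ (GA : Submodule (ZMod 2) (PauliT {x // p x}))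
      (GB : Submodule (ZMod 2) (PauliT {x // ¬ p x})),
      G = tensorAlong p GA GB

/-- Identification of `Pauli (n₁+n₂)` with `Pauli n₁ × Pauli n₂`. -/
def pauliSumEquiv (n₁ n₂ : ℕ) :
    Pauli (n₁ + n₂) ≃ₗ[ZMod 2] Pauli n₁ × Pauli n₂ :=
  (LinearEquiv.funCongrLeft (ZMod 2) (ZMod 2 × ZMod 2) finSumFinEquiv).trans
    (LinearEquiv.sumArrowLequivProdArrow _ _ _ _)

/-- Tensor product of stabilizer subspaces on `n₁` and `n₂` qubits. -/
def tensorFin {n₁ n₂ : ℕ} (G₁ : Submodule (ZMod 2) (Pauli n₁))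
    (G₂ : Submodule (ZMod 2) (Pauli n₂)) :
    Submodule (ZMod 2) (Pauli (n₁ + n₂)) :=
  (G₁.prod G₂).comap (pauliSumEquiv n₁ n₂).toLinearMap



def om (p q : ZMod 2 × ZMod 2) : ZMod 2 := p.1 * q.2 + p.2 * q.1

theorem om_zero_left (q : ZMod 2 × ZMod 2) : om 0 q = 0 := by simp [om]
theorem om_zero_right (q : ZMod 2 × ZMod 2) : om q 0 = 0 := by simp [om]

theorem om_key : ∀ v s u : ZMod 2 × ZMod 2, om v s = 1 → om s u = 1 →
    v = u + om v u • s := by decide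

theorem zmod2_ne_zero : ∀ a : ZMod 2, a ≠ 0 → a = 1 := by decide
theorem zmod2_add : ∀ a b : ZMod 2, a + b = 0 → a = b := by decide

theorem sympl_eq (u v : PauliT ι) : sympl u v = ∑ i, om (u i) (v i) := rfl

theorem sympl_comm' (u v : PauliT ι) : sympl u v = sympl v u := by
  unfold sympl
  exact Finset.sum_congr rfl fun i _ => by ring

theorem sympl_add_left (u w v : PauliT ι) : sympl (u + w) v = sympl u v + sympl w v := by
  unfold sympl
  rw [← Finset.sum_add_distrib]
  exact Finset.sum_congr rfl fun i _ => by simp only [Pi.add_apply, Prod.fst_add, Prod.snd_add]; ring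

theorem sympl_smul_left (c : ZMod 2) (u v : PauliT ι) : sympl (c • u) v = c * sympl u v := by
  unfold sympl
  rw [Finset.mul_sum]
  exact Finset.sum_congr rfl fun i _ => by
    simp only [Pi.smul_apply, Prod.smul_fst, Prod.smul_snd, smul_eq_mul]; ring

theorem sympl_span {S : Set (PauliT ι)} {v : PauliT ι} (h : ∀ s ∈ S, sympl v s = 0) :
    ∀ g ∈ Submodule.span (ZMod 2) S, sympl v g = 0 := by
  intro g hg
  induction hg using Submodule.span_induction with
  | mem x hx => exact h x hx
  | zero => simp [sympl]
  | add x y _ _ hx hy =>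
    rw [sympl_comm', sympl_add_left, sympl_comm' x, sympl_comm' y, hx, hy, add_zero]
  | smul a x _ hx => rw [sympl_comm', sympl_smul_left, sympl_comm' x, hx, mul_zero]

theorem wt_le_of (v : PauliT ι) (S : Finset ι) (h : ∀ i, i ∉ S → v i = 0) : wt v ≤ S.card := by
  unfold wt
  apply Finset.card_le_card
  intro i hi
  by_contra hc
  simp [h i hc] at hi

theorem le_wt_of (v : PauliT ι) (S : Finset ι) (h : ∀ i ∈ S, v i ≠ 0) : S.card ≤ wt v := by
  unfold wt
  apply Finset.card_le_card
  intro i hi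
  simp [h i hi]

theorem wt_lt_of (v w : PauliT ι) (i : ι) (hi : v i ≠ 0) (hw : w i = 0)
    (h : ∀ j, v j = 0 → w j = 0) : wt w < wt v := by
  unfold wt
  apply Finset.card_lt_card
  rw [Finset.ssubset_iff_of_subset]
  · exact ⟨i, by simp [hi], by simp [hw]⟩
  · intro j hj
    simp only [Finset.mem_filter, Finset.mem_univ, true_and] at hj ⊢
    exact fun hc => hj (h j hc)

theorem sympl_single_site (v g : PauliT ι) (i : ι) (h : ∀ j, j ≠ i → v j = 0) :
    sympl v g = om (v i) (g i) := by
  rw [sympl_eq]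
  refine Finset.sum_eq_single i (fun j _ hj => ?_) (by simp)
  rw [h j hj, om_zero_left]

theorem sympl_two_sites (v g : PauliT ι) (i j : ι) (hij : i ≠ j)
    (h : ∀ l, l ≠ i → l ≠ j → g l = 0) :
    sympl v g = om (v i) (g i) + om (v j) (g j) := by
  rw [sympl_eq, ← Finset.sum_pair (f := fun l => om (v l) (g l)) hij]
  symm
  apply Finset.sum_subset (Finset.subset_univ _)
  intro l _ hl
  simp only [Finset.mem_insert, Finset.mem_singleton, not_or] at hl
  rw [h l hl.1 hl.2, om_zero_right]

theorem supp_pair (g : PauliT ι) (i j : ι) (hij : i ≠ j) (hi : g i ≠ 0) (hj : g j ≠ 0)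
    (hw : wt g ≤ 2) : ∀ l, l ≠ i → l ≠ j → g l = 0 := by
  intro l hli hlj
  by_contra hl
  have := le_wt_of g {l, i, j} (by
    intro a ha
    simp only [Finset.mem_insert, Finset.mem_singleton] at ha
    rcases ha with rfl | rfl | rfl <;> assumption)
  rw [Finset.card_eq_three.mpr ⟨l, i, j, hli, hlj, hij, rfl⟩] at this
  omega

theorem wt_single_le (i : ι) (p : ZMod 2 × ZMod 2) :
    wt (Pi.single i p : PauliT ι) ≤ 1 := by
  refine (wt_le_of _ {i} fun j hj => ?_).trans (by simp)
  simp only [Finset.mem_singleton] at hj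
  exact Pi.single_eq_of_ne hj _

/-- Low-weight generators and no weight-one logicals force self-duality. -/
theorem dual_le (S : Set (PauliT ι)) (hS : ∀ s ∈ S, wt s ≤ 2)
    (hstab : IsStabilizer (Submodule.span (ZMod 2) S))
    (hd : ∀ v, inDual (Submodule.span (ZMod 2) S) v → wt v ≤ 1 →
      v ∈ Submodule.span (ZMod 2) S) :
    ∀ (m : ℕ) (v : PauliT ι), wt v = m → inDual (Submodule.span (ZMod 2) S) v →
      v ∈ Submodule.span (ZMod 2) S := by
  intro m
  induction m using Nat.strong_induction_on with
  | _ m ih =>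
  intro v hm hv
  by_cases hv0 : v = 0
  · rw [hv0]; exact Submodule.zero_mem _
  obtain ⟨i, hi⟩ := Function.ne_iff.mp hv0
  simp only [Pi.zero_apply] at hi
  -- reduction step
  have step : ∀ g ∈ Submodule.span (ZMod 2) S, g i = v i →
      (∀ j, v j = 0 → g j = 0) → v ∈ Submodule.span (ZMod 2) S := by
    intro g hg hgi hgj
    have h1 : wt (v + (1 : ZMod 2) • g) < m := by
      rw [← hm]
      refine wt_lt_of v _ i hi ?_ ?_
      · simp only [Pi.add_apply, Pi.smul_apply, one_smul, hgi]
        exact CharTwo.add_self_eq_zero _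
      · intro j hj
        simp [hj, hgj j hj]
    have h2 := ih _ h1 _ rfl (by
      intro x hx
      rw [sympl_add_left, sympl_smul_left, hv x hx, hstab g hg x hx]; simp)
    simpa using Submodule.sub_mem _ h2 (Submodule.smul_mem _ (1 : ZMod 2) hg)
  have single : ∀ p : ZMod 2 × ZMod 2, (∀ s ∈ S, om p (s i) = 0) →
      (Pi.single i p : PauliT ι) ∈ Submodule.span (ZMod 2) S := by
    intro p hp
    apply hd _ _ (wt_single_le i p)
    apply sympl_span
    intro s hs
    rw [sympl_single_site _ _ i (fun j hj => Pi.single_eq_of_ne hj _), Pi.single_eq_same]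
    exact hp s hs
  by_cases h1 : ∀ s ∈ S, om (v i) (s i) = 0
  · refine step _ (single _ h1) (by simp) ?_
    intro j hj
    by_cases hji : j = i
    · subst hji; exact absurd hj hi
    · exact Pi.single_eq_of_ne hji _
  push Not at h1
  obtain ⟨s, hs, hvs⟩ := h1
  have hvs := zmod2_ne_zero _ hvs
  by_cases h2 : ∀ u ∈ S, om (s i) (u i) = 0
  · have := hv _ (single _ h2)
    rw [sympl_comm', sympl_single_site _ _ i (fun j hj => Pi.single_eq_of_ne hj _),
      Pi.single_eq_same] at this
    have h3 : om (v i) (s i) = om (s i) (v i) := by unfold om; ring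
    rw [h3, this] at hvs
    exact absurd hvs (by decide)
  push Not at h2
  obtain ⟨u, hu, hsu⟩ := h2
  have hsu := zmod2_ne_zero _ hsu
  have hsG := Submodule.subset_span (R := ZMod 2) hs
  have huG := Submodule.subset_span (R := ZMod 2) hu
  have hj : ∃ j, j ≠ i ∧ om (s j) (u j) ≠ 0 := by
    by_contra hc
    push Not at hc
    have h3 := hstab s hsG u huG
    rw [sympl_eq, Finset.sum_eq_single i (fun j _ hj => hc j hj) (by simp), hsu] at h3
    exact absurd h3 (by decide)
  obtain ⟨j, hji, hsuj⟩ := hj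
  have hsuj := zmod2_ne_zero _ hsuj
  have nz : ∀ l, om (s l) (u l) = 1 → s l ≠ 0 ∧ u l ≠ 0 := by
    intro l hl
    constructor
    · intro h; rw [h, om_zero_left] at hl; exact absurd hl (by decide)
    · intro h; rw [h, om_zero_right] at hl; exact absurd hl (by decide)
  have ss := supp_pair s i j hji.symm (nz i hsu).1 (nz j hsuj).1 (hS s hs)
  have su := supp_pair u i j hji.symm (nz i hsu).2 (nz j hsuj).2 (hS u hu)
  have e1 := hv s hsG
  have e2 := hv u huG
  rw [sympl_two_sites _ _ i j hji.symm ss] at e1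
  rw [sympl_two_sites _ _ i j hji.symm su] at e2
  have hvsj : om (v j) (s j) = 1 := by rw [← zmod2_add _ _ e1, hvs]
  have e2 := zmod2_add _ _ e2
  have k1 := om_key _ _ _ hvs hsu
  have k2 := om_key _ _ _ hvsj hsuj
  rw [← e2] at k2
  refine step (u + om (v i) (u i) • s)
    (Submodule.add_mem _ huG (Submodule.smul_mem _ _ hsG)) k1.symm ?_
  intro l hl
  by_cases hli : l = i
  · rw [hli] at hl
    exact absurd hl hi
  by_cases hlj : l = j
  · rw [hlj] at hl ⊢
    rw [hl] at k2
    exact k2.symm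
  · simp [ss l hli hlj, su l hli hlj]

theorem three_le_Wopt (n k : ℕ) : 3 ≤ Wopt n k 2 := by
  unfold Wopt Wgt
  refine le_iInf fun G => le_iInf fun ⟨hst, _, hdist⟩ => le_iInf fun r => le_iInf fun g =>
    le_iInf fun ⟨_, hspan⟩ => ?_
  by_contra hc
  have hlt : ∀ i, wt (g i) ≤ 2 := by
    intro i
    have h1 : (wt (g i) : ℕ∞) < 3 :=
      (Finset.le_sup (f := fun i => (wt (g i) : ℕ∞)) (Finset.mem_univ i)).trans_lt (not_le.mp hc)
    have h2 : wt (g i) < 3 := by exact_mod_cast h1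
    omega
  subst hspan
  have key := dual_le (Set.range g) (by rintro _ ⟨i, rfl⟩; exact hlt i) hst (by
    intro v hv hw
    by_contra hvn
    have h1 : distG (Submodule.span (ZMod 2) (Set.range g)) ≤ wt v :=
      sInf_le ⟨v, ⟨hv, hvn⟩, rfl⟩
    rw [hdist] at h1
    have h2 : 2 ≤ wt v := by exact_mod_cast h1
    omega)
  have hemp : {v | inDual (Submodule.span (ZMod 2) (Set.range g)) v ∧
      v ∉ Submodule.span (ZMod 2) (Set.range g)} = ∅ := by
    ext v
    simp only [Set.mem_setOf_eq, Set.mem_empty_iff_false, iff_false, not_and, not_not]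
    exact key _ v rfl
  unfold distG at hdist
  rw [hemp, Set.image_empty, sInf_empty] at hdist
  exact absurd hdist (by decide)

/-! The construction. -/

def emb {k : ℕ} (b : Fin k) (c : PauliT (Fin 4)) : Pauli (4 * k) := fun i =>
  if (finProdFinEquiv.symm i).2 = b then c (finProdFinEquiv.symm i).1 else 0

def blk {k : ℕ} (b : Fin k) (v : Pauli (4 * k)) : PauliT (Fin 4) :=
  fun a => v (finProdFinEquiv (a, b))

theorem emb_apply {k : ℕ} (b b' : Fin k) (c : PauliT (Fin 4)) (a : Fin 4) :
    emb b c (finProdFinEquiv (a, b')) = if b' = b then c a else 0 := by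
  simp [emb]

theorem blk_emb {k : ℕ} (b b' : Fin k) (c : PauliT (Fin 4)) :
    blk b' (emb b c) = if b' = b then c else 0 := by
  funext a
  unfold blk
  rw [emb_apply]
  split_ifs <;> rfl

theorem sympl_emb {k : ℕ} (b : Fin k) (v : Pauli (4 * k)) (c : PauliT (Fin 4)) :
    sympl v (emb b c) = sympl (blk b v) c := by
  rw [sympl_eq, sympl_eq, ← finProdFinEquiv.sum_comp, Fintype.sum_prod_type]
  refine Finset.sum_congr rfl fun a _ => ?_
  rw [Finset.sum_eq_single b]
  · rw [emb_apply, if_pos rfl]; rfl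
  · intro b' _ hb
    rw [emb_apply, if_neg hb, om_zero_right]
  · simp

theorem wt_emb_le {k : ℕ} (b : Fin k) (c : PauliT (Fin 4)) (S : Finset (Fin 4))
    (h : ∀ a, a ∉ S → c a = 0) : wt (emb b c) ≤ S.card := by
  refine (wt_le_of _ (S.image fun a => finProdFinEquiv (a, b)) ?_).trans Finset.card_image_le
  intro i hi
  obtain ⟨⟨a, b'⟩, rfl⟩ := finProdFinEquiv.surjective i
  rw [emb_apply]
  split_ifs with hb
  · apply h
    intro ha
    exact hi (Finset.mem_image.mpr ⟨a, ha, by rw [hb]⟩)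
  · rfl

def cg : Fin 3 → PauliT (Fin 4) :=
  ![![(1,0), (1,0), (1,0), 0], ![(1,1), (0,1), 0, (1,0)], ![(0,1), 0, (0,1), (0,1)]]

def lg1 : PauliT (Fin 4) := ![(0,1), (1,1), 0, 0]
def lg2 : PauliT (Fin 4) := ![(1,1), 0, (1,1), 0]

theorem cg_iso : ∀ a b, sympl (cg a) (cg b) = 0 := by
  intro a b
  rw [sympl_eq, Fin.sum_univ_four]
  revert a b
  decide

theorem lg1_dual : ∀ a, sympl lg1 (cg a) = 0 := by
  intro a
  rw [sympl_eq, Fin.sum_univ_four]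
  revert a
  decide

theorem lg2_dual : ∀ a, sympl lg2 (cg a) = 0 := by
  intro a
  rw [sympl_eq, Fin.sum_univ_four]
  revert a
  decide

theorem lg_anti : sympl lg1 lg2 = 1 := by
  rw [sympl_eq, Fin.sum_univ_four]
  decide

theorem cg_detect : ∀ (i : Fin 4) (p : ZMod 2 × ZMod 2), (∀ a, om p (cg a i) = 0) → p = 0 := by
  decide

theorem cg_supp : ∀ a : Fin 3, ∃ i : Fin 4, cg a i = 0 := by decide

theorem cg_indep : ∀ x y z : ZMod 2, (∀ i, x • cg 0 i + y • cg 1 i + z • cg 2 i = 0) →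
    x = 0 ∧ y = 0 ∧ z = 0 := by decide

def gen (k : ℕ) (t : Fin (3 * k)) : Pauli (4 * k) :=
  emb (finProdFinEquiv.symm t).2 (cg (finProdFinEquiv.symm t).1)

theorem gen_apply (k : ℕ) (a : Fin 3) (b : Fin k) :
    gen k (finProdFinEquiv (a, b)) = emb b (cg a) := by simp [gen]

theorem gen_indep (k : ℕ) : LinearIndependent (ZMod 2) (gen k) := by
  rw [Fintype.linearIndependent_iff]
  intro f hf t
  obtain ⟨⟨a, b⟩, rfl⟩ := finProdFinEquiv.surjective t
  rw [← finProdFinEquiv.sum_comp, Fintype.sum_prod_type] at hf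
  have h := cg_indep (f (finProdFinEquiv (0, b))) (f (finProdFinEquiv (1, b)))
    (f (finProdFinEquiv (2, b))) (by
      intro i
      have h1 := congrFun hf (finProdFinEquiv (i, b))
      simp only [Finset.sum_apply, Pi.smul_apply, gen_apply, emb_apply, smul_ite, smul_zero,
        Finset.sum_ite_eq, Finset.mem_univ, if_true, Fin.sum_univ_three, Pi.zero_apply] at h1
      exact h1)
  fin_cases a
  · exact h.1
  · exact h.2.1
  · exact h.2.2

theorem gen_dual (k : ℕ) (v : Pauli (4 * k)) (h : ∀ b a, sympl (blk b v) (cg a) = 0) :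
    inDual (Submodule.span (ZMod 2) (Set.range (gen k))) v := by
  apply sympl_span
  rintro _ ⟨t, rfl⟩
  rw [gen, sympl_emb]
  exact h _ _

theorem emb_dual (k : ℕ) (b : Fin k) (c : PauliT (Fin 4)) (h : ∀ a, sympl c (cg a) = 0) :
    inDual (Submodule.span (ZMod 2) (Set.range (gen k))) (emb b c) := by
  apply gen_dual
  intro b' a
  rw [blk_emb]
  split_ifs
  · exact h a
  · simp [sympl]

theorem gen_stab (k : ℕ) : IsStabilizer (Submodule.span (ZMod 2) (Set.range (gen k))) := by
  intro u hu v hv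
  rw [sympl_comm']
  refine sympl_span (v := v) ?_ u hu
  rintro _ ⟨t, rfl⟩
  rw [sympl_comm']
  exact emb_dual k _ _ (fun a => cg_iso _ a) v hv

theorem gen_dist (k : ℕ) (hk : 1 ≤ k) :
    distG (Submodule.span (ZMod 2) (Set.range (gen k))) = 2 := by
  apply le_antisymm
  · have b : Fin k := ⟨0, hk⟩
    have h1 : emb b lg1 ∉ Submodule.span (ZMod 2) (Set.range (gen k)) := by
      intro hc
      have h2 := emb_dual k b lg2 lg2_dual _ hc
      rw [sympl_comm', sympl_emb, blk_emb, if_pos rfl, lg_anti] at h2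
      exact absurd h2 (by decide)
    have h3 : wt (emb b lg1) ≤ 2 := wt_emb_le b lg1 {0, 1} (by decide)
    calc distG (Submodule.span (ZMod 2) (Set.range (gen k))) ≤ (wt (emb b lg1) : ℕ∞) := sInf_le ⟨_, ⟨emb_dual k b lg1 lg1_dual, h1⟩, rfl⟩
      _ ≤ 2 := by exact_mod_cast h3
  · apply le_sInf
    rintro _ ⟨v, ⟨hv, hvn⟩, rfl⟩
    by_contra hc
    have hw : wt v ≤ 1 := by
      have h1 : (wt v : ℕ∞) < 2 := not_le.mp hc
      have h2 : wt v < 2 := by exact_mod_cast h1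
      omega
    apply hvn
    by_cases hv0 : v = 0
    · rw [hv0]; exact Submodule.zero_mem _
    exfalso
    obtain ⟨i, hi⟩ := Function.ne_iff.mp hv0
    simp only [Pi.zero_apply] at hi
    have hs : ∀ j, j ≠ i → v j = 0 := by
      intro j hj
      by_contra hne
      have := le_wt_of v {j, i} (by
        intro a ha
        simp only [Finset.mem_insert, Finset.mem_singleton] at ha
        rcases ha with rfl | rfl <;> assumption)
      rw [Finset.card_pair hj] at this
      omega
    obtain ⟨⟨q, b⟩, rfl⟩ := finProdFinEquiv.surjective i
    apply hi
    apply cg_detect q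
    intro a
    have h4 := hv (gen k (finProdFinEquiv (a, b))) (Submodule.subset_span ⟨_, rfl⟩)
    rw [sympl_single_site _ _ _ hs, gen_apply, emb_apply, if_pos rfl] at h4
    exact h4

theorem Wopt_le_three (k : ℕ) (hk : 1 ≤ k) : Wopt (4 * k) k 2 ≤ 3 := by
  unfold Wopt Wgt
  refine iInf₂_le_of_le (Submodule.span (ZMod 2) (Set.range (gen k)))
    ⟨gen_stab k, ?_, gen_dist k hk⟩ ?_
  · rw [finrank_span_eq_card (gen_indep k), Fintype.card_fin]
    omega
  · refine iInf_le_of_le (3 * k) (iInf₂_le_of_le (gen k) ⟨gen_indep k, rfl⟩ ?_)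
    apply Finset.sup_le
    intro t _
    obtain ⟨i, hi⟩ := cg_supp (finProdFinEquiv.symm t).1
    have h : wt (gen k t) ≤ 3 := by
      refine (wt_emb_le _ _ (Finset.univ.erase i) ?_).trans (by simp)
      intro a ha
      have : a = i := by simpa using ha
      rw [this, hi]
    exact_mod_cast h

/-- for every `k ≥ 1`, `W_opt(n,k,2) ≥ 3` for all `n`, equality is attained
at `n = 4k`, and hence the minimum over all blocklengths of `W_opt(n,k,2)` is `3`. -/
theorem min_Wopt_distance_two (k : ℕ) (hk : 1 ≤ k) :
    (∀ n : ℕ, 3 ≤ Wopt n k 2) ∧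
    Wopt (4 * k) k 2 = 3 ∧
    (⨅ n : ℕ, Wopt n k 2) = 3 := by
  have h := le_antisymm (Wopt_le_three k hk) (three_le_Wopt (4 * k) k)
  refine ⟨fun n => three_le_Wopt n k, h, le_antisymm ?_ (le_iInf fun n => three_le_Wopt n k)⟩
  exact (iInf_le _ (4 * k)).trans h.le

end
end

section
/- Let G ⊆ P_n be a stabilizer group of dimension n − k with k ≥ 1 (so n > k) and distance d(G) ≥ 2. Then W(G) ≥ ⌈2n/(n−k)⌉. In particular, for all k ≥ 1 and d ≥ 2, W_opt(n, k, d) ≥ ⌈2n/(n−k)⌉. -/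
open scoped Classical

noncomputable section

variable {ι : Type} [Fintype ι]

def projM {n : ℕ} (M : Finset (Fin n)) : Pauli n →ₗ[ZMod 2] Pauli n where
  toFun v := fun i => if i ∈ M then 0 else v i
  map_add' u v := by funext i; by_cases h : i ∈ M <;> simp [h]
  map_smul' c v := by funext i; by_cases h : i ∈ M <;> simp [h]

def formAt {n : ℕ} (i : Fin n) (a : ZMod 2 × ZMod 2) : Pauli n →ₗ[ZMod 2] ZMod 2 where
  toFun v := a.1 * (v i).2 + a.2 * (v i).1
  map_add' u v := by simp; ring
  map_smul' c v := by simp; ring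

lemma sympl_single_eq {n : ℕ} (i : Fin n) (a : ZMod 2 × ZMod 2) (u : Pauli n) :
    sympl (Pi.single i a) u = formAt i a u := by
  unfold sympl
  rw [Finset.sum_eq_single i]
  · simp [formAt]
  · intro b _ hb
    simp [Pi.single_eq_of_ne hb]
  · simp

lemma wt_single_le_s3 {n : ℕ} (i : Fin n) (a : ZMod 2 × ZMod 2) :
    wt (Pi.single i a : Pauli n) ≤ 1 := by
  unfold wt
  rw [← Finset.card_singleton i]
  apply Finset.card_le_card
  intro j hj
  simp only [Finset.mem_filter] at hj
  by_contra h
  simp only [Finset.mem_singleton] at h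
  exact hj.2 (by simp [Pi.single_apply, h])

lemma single_mem_of_dist {n : ℕ} (G : Submodule (ZMod 2) (Pauli n)) (hd : 2 ≤ distG G)
    (i : Fin n) (a : ZMod 2 × ZMod 2) (h : ∀ g ∈ G, formAt i a g = 0) :
    (Pi.single i a : Pauli n) ∈ G := by
  by_contra hn
  have h1 : distG G ≤ (wt (Pi.single i a : Pauli n) : ℕ∞) :=
    sInf_le ⟨_, ⟨fun g hg => by rw [sympl_single_eq]; exact h g hg, hn⟩, rfl⟩
  have h2 := hd.trans h1
  have h3 := wt_single_le_s3 i a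
  have h4 : 2 ≤ wt (Pi.single i a : Pauli n) := by exact_mod_cast h2
  omega

def badSet {n : ℕ} (G : Submodule (ZMod 2) (Pauli n)) : Finset (Fin n) :=
  Finset.univ.filter fun i => ∃ a : ZMod 2 × ZMod 2, a ≠ 0 ∧ (Pi.single i a : Pauli n) ∈ G

lemma finrank_proj_le {n : ℕ} (G : Submodule (ZMod 2) (Pauli n)) :
    Module.finrank (ZMod 2) (G.map (projM (badSet G))) + (badSet G).card
      ≤ Module.finrank (ZMod 2) G := by
  set M := badSet G with hM
  have h1 := LinearMap.finrank_range_add_finrank_ker ((projM M).domRestrict G)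
  have h2 : LinearMap.range ((projM M).domRestrict G) = G.map (projM M) :=
    LinearMap.range_domRestrict _ _
  rw [h2] at h1
  have hex : ∀ i : M, ∃ a : ZMod 2 × ZMod 2, a ≠ 0 ∧ (Pi.single i.1 a : Pauli n) ∈ G :=
    fun i => (Finset.mem_filter.mp i.2).2
  choose a ha haG using hex
  have hker : ∀ i : M, (⟨Pi.single i.1 (a i), haG i⟩ : G) ∈
      LinearMap.ker ((projM M).domRestrict G) := by
    intro i
    rw [LinearMap.mem_ker]
    funext j
    by_cases hj : j ∈ M
    · simp [projM, hj]
    · have : j ≠ i.1 := fun h => hj (h ▸ i.2)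
      simp [projM, hj, Pi.single_eq_of_ne this]
  let f : M → LinearMap.ker ((projM M).domRestrict G) := fun i => ⟨_, hker i⟩
  have hli : LinearIndependent (ZMod 2) f := by
    rw [Fintype.linearIndependent_iff]
    intro c hc i
    have h3 := congrArg (fun x : LinearMap.ker ((projM M).domRestrict G) =>
      ((x : G) : Pauli n) i.1) hc
    simp only [Submodule.coe_sum, Submodule.coe_smul, Finset.sum_apply, Pi.smul_apply] at h3
    rw [Finset.sum_eq_single i] at h3
    · have h4 : c i • a i = 0 := by simpa [f] using h3
      exact (smul_eq_zero.mp h4).resolve_right (ha i)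
    · intro b _ hb
      have : i.1 ≠ b.1 := fun h => hb (Subtype.ext h.symm)
      simp [f, Pi.single_eq_of_ne this]
    · simp
  have h5 := hli.fintype_card_le_finrank
  rw [Fintype.card_coe] at h5
  omega

lemma key_bound {n r : ℕ} (G : Submodule (ZMod 2) (Pauli n)) (hd : 2 ≤ distG G)
    (g : Fin r → Pauli n) (hg : Submodule.span (ZMod 2) (Set.range g) = G) (W : ℕ)
    (hW : ∀ i, wt (g i) ≤ W) :
    2 * (n - (badSet G).card) ≤
      Module.finrank (ZMod 2) (G.map (projM (badSet G))) * W := by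
  set M := badSet G with hM
  obtain ⟨κ, b, hb, hspan, hli⟩ := exists_linearIndependent' (ZMod 2) (projM M ∘ g)
  have : Finite κ := Finite.of_injective b hb
  have : Fintype κ := Fintype.ofFinite κ
  have hsp : Submodule.span (ZMod 2) (Set.range ((projM M ∘ g) ∘ b)) = G.map (projM M) := by
    rw [hspan, ← hg, Submodule.map_span, Set.range_comp]
  have hcard : Fintype.card κ = Module.finrank (ZMod 2) (G.map (projM M)) := by
    rw [← hsp, finrank_span_eq_card hli]
  have htwo : ∀ i, i ∉ M → 2 ≤ (Finset.univ.filter fun j : κ => g (b j) i ≠ 0).card := by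
    intro i hi
    by_contra hlt
    have hle : (Finset.univ.filter fun j : κ => g (b j) i ≠ 0).card ≤ 1 := by omega
    rw [Finset.card_le_one] at hle
    obtain ⟨a, ha, hall⟩ : ∃ a : ZMod 2 × ZMod 2, a ≠ 0 ∧
        ∀ j : κ, g (b j) i = 0 ∨ g (b j) i = a := by
      by_cases hne : ∃ j : κ, g (b j) i ≠ 0
      · obtain ⟨j, hj⟩ := hne
        refine ⟨g (b j) i, hj, fun j' => ?_⟩
        by_cases h0 : g (b j') i = 0
        · exact Or.inl h0
        · right
          rw [hle j' (by simpa using h0) j (by simpa using hj)]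
      · push Not at hne
        exact ⟨(1, 0), by simp, fun j => Or.inl (hne j)⟩
    apply hi
    refine Finset.mem_filter.mpr ⟨Finset.mem_univ _, a, ha, ?_⟩
    apply single_mem_of_dist G hd
    have hproj : ∀ v : Pauli n, formAt i a (projM M v) = formAt i a v := by
      intro v; simp [formAt, projM, hi]
    have hle2 : G.map (projM M) ≤ LinearMap.ker (formAt i a) := by
      rw [← hsp, Submodule.span_le]
      rintro _ ⟨j, rfl⟩
      simp only [SetLike.mem_coe, LinearMap.mem_ker, Function.comp_apply]
      rw [hproj]
      rcases hall j with h | h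
      · simp [formAt, h]
      · simp only [formAt, LinearMap.coe_mk, AddHom.coe_mk, h]
        rw [mul_comm a.2]
        exact CharTwo.add_self_eq_zero _
    intro v hv
    rw [← hproj]
    exact hle2 (Submodule.mem_map_of_mem hv)
  have hdc : ∑ j : κ, wt (g (b j)) =
      ∑ i : Fin n, (Finset.univ.filter fun j : κ => g (b j) i ≠ 0).card := by
    simp only [wt, Finset.card_filter]
    exact Finset.sum_comm
  calc 2 * (n - M.card) = ∑ i ∈ Mᶜ, 2 := by
        simp [Finset.card_compl, mul_comm]
    _ ≤ ∑ i ∈ Mᶜ, (Finset.univ.filter fun j : κ => g (b j) i ≠ 0).card :=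
        Finset.sum_le_sum fun i hi => htwo i (by simpa using hi)
    _ ≤ ∑ i : Fin n, (Finset.univ.filter fun j : κ => g (b j) i ≠ 0).card :=
        Finset.sum_le_sum_of_subset (Finset.subset_univ _)
    _ = ∑ j : κ, wt (g (b j)) := hdc.symm
    _ ≤ ∑ j : κ, W := Finset.sum_le_sum fun j _ => hW _
    _ = _ := by simp [← hcard]

lemma main_bound (n k : ℕ) (hk : 1 ≤ k) (hkn : k < n)
    (G : Submodule (ZMod 2) (Pauli n))
    (hr : Module.finrank (ZMod 2) ↥G = n - k) (hd : 2 ≤ distG G) :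
    (⌈(2 * (n : ℚ)) / ((n : ℚ) - (k : ℚ))⌉₊ : ℕ∞) ≤ Wgt G := by
  unfold Wgt
  refine le_iInf fun r => le_iInf fun g => le_iInf fun hg => ?_
  set W : ℕ := Finset.univ.sup fun i => wt (g i) with hWdef
  have hW : ∀ i, wt (g i) ≤ W := fun i =>
    Finset.le_sup (f := fun i => wt (g i)) (Finset.mem_univ i)
  have h1 := key_bound G hd g hg.2 W hW
  have h2 := finrank_proj_le G
  rw [hr] at h2
  set J := Module.finrank (ZMod 2) (G.map (projM (badSet G)))
  have hWJ : 2 * n ≤ W * (n - k) := by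
    generalize (badSet G).card = m at *
    obtain ⟨t, ht⟩ : ∃ t, n = k + t := ⟨n - k, by omega⟩
    have ht' : n - k = t := by omega
    rw [ht'] at h2 ⊢
    have hmn : m ≤ n := by omega
    obtain ⟨q, hq⟩ : ∃ q, n = m + q := ⟨n - m, by omega⟩
    have hq' : n - m = q := by omega
    rw [hq'] at h1
    rcases Nat.lt_or_ge W 2 with hlt | hge
    · have : J * W ≤ J * 1 := Nat.mul_le_mul_left _ (by omega)
      omega
    · have h3 : W * (J + m) ≤ W * t := Nat.mul_le_mul_left _ h2
      have h4 : 2 * m ≤ W * m := Nat.mul_le_mul_right _ hge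
      nlinarith
  have hceil : ⌈(2 * (n : ℚ)) / ((n : ℚ) - (k : ℚ))⌉₊ ≤ W := by
    rw [Nat.ceil_le]
    have hkq : (k : ℚ) < n := by exact_mod_cast hkn
    rw [div_le_iff₀ (by linarith), ← Nat.cast_sub hkn.le]
    exact_mod_cast hWJ
  have hpos : ∃ i, wt (g i) = W := by
    have hne : (Finset.univ : Finset (Fin r)).Nonempty := by
      by_contra h
      rw [Finset.not_nonempty_iff_eq_empty] at h
      have : W = 0 := by rw [hWdef, h]; rfl
      rw [this] at hWJ
      omega
    obtain ⟨i, _, hi⟩ := Finset.exists_mem_eq_sup Finset.univ hne (fun i => wt (g i))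
    exact ⟨i, hi.symm⟩
  obtain ⟨i, hi⟩ := hpos
  calc _ ≤ (W : ℕ∞) := by exact_mod_cast hceil
    _ = (wt (g i) : ℕ∞) := by rw [hi]
    _ ≤ _ := Finset.le_sup (f := fun i => (wt (g i) : ℕ∞)) (Finset.mem_univ i)

/-- any stabilizer group of dimension `n - k` with `k ≥ 1` (so `n > k`) and
distance at least `2` has weight at least `⌈2n/(n-k)⌉`; in particular
`W_opt(n,k,d) ≥ ⌈2n/(n-k)⌉` for all `d ≥ 2`. -/
theorem Wgt_lower_bound_ceil (n k : ℕ) (hk : 1 ≤ k) (hkn : k < n) :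
    (∀ G : Submodule (ZMod 2) (Pauli n), IsStabilizer G →
        Module.finrank (ZMod 2) ↥G = n - k → 2 ≤ distG G →
        (⌈(2 * (n : ℚ)) / ((n : ℚ) - (k : ℚ))⌉₊ : ℕ∞) ≤ Wgt G) ∧
    (∀ d : ℕ∞, 2 ≤ d →
        (⌈(2 * (n : ℚ)) / ((n : ℚ) - (k : ℚ))⌉₊ : ℕ∞) ≤ Wopt n k d) := by
  refine ⟨fun G _ hr hd => main_bound n k hk hkn G hr hd, fun d hd => ?_⟩
  unfold Wopt
  refine le_iInf fun G => le_iInf fun hG => ?_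
  exact main_bound n k hk hkn G hG.2.1 (hG.2.2 ▸ hd)

end
end
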